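/- For every Kreweras word w of length 3n, the map σ_w : {1,…,3n} → {1,…,3n} is a bijection (a permutation of {1,…,3n}). -/

import Mathlib

/-- The three letters of a Kreweras word. -/
inductive KLetter : Type
  | A | B | C
deriving DecidableEq, Repr

open KLetter

/-- `w` is a Kreweras word of length `3 * n`: it has `n` `A`'s, `n` `B`'s, `n` `C`'s,
and every prefix has at least as many `A`'s as `B`'s and at least as many `A`'s as `C`'s. -/
def IsKrewerasWord (n : ℕ) (w : List KLetter) : Prop :=
  w.length = 3 * n ∧ w.count A = n ∧ w.count B = n ∧ w.count C = n ∧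
  ∀ k : ℕ, (w.take k).count B ≤ (w.take k).count A ∧
           (w.take k).count C ≤ (w.take k).count A

/-- `kiota w` is the smallest index `ι ≥ 1` (1-indexed) such that the prefix of
length `ι` of `w` has equally many `A`'s as `B`'s, or equally many `A`'s as `C`'s
(and `0` if no such index exists). -/
def kiota (w : List KLetter) : ℕ :=
  (((List.range (w.length + 1)).filter fun k =>
      decide (1 ≤ k) &&
      (((w.take k).count A == (w.take k).count B) ||
       ((w.take k).count A == (w.take k).count C))).headD 0)

/-- Promotion of a Kreweras word:
`pro w = (w₂, …, w_{ι-1}, A, w_{ι+1}, …, w_{3n}, w_ι)` where `ι = kiota w`. -/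
def pro (w : List KLetter) : List KLetter :=
  ((w.drop 1).set (kiota w - 2) A) ++ [w.getD (kiota w - 1) A]

/-- The trip permutation `σ_w` of a Kreweras word of length `3 * n`, as a function on
1-indexed positions: `σ_w i` is the unique element of `{1, …, 3n}` congruent to
`kiota (pro^[i-1] w) + i - 1` modulo `3 * n`. -/
def ksigma (n : ℕ) (w : List KLetter) (i : ℕ) : ℕ :=
  (kiota (pro^[i - 1] w) + i - 2) % (3 * n) + 1

/-- `keps w i` is the letter of `pro^[i-1] w` in (1-indexed) position `kiota (pro^[i-1] w)`. -/
def keps (w : List KLetter) (i : ℕ) : KLetter :=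
  (pro^[i - 1] w).getD (kiota (pro^[i - 1] w) - 1) A

/-- The negation swapping `B` and `C` (and fixing `A`). -/
def negL : KLetter → KLetter
  | A => A
  | B => C
  | C => B

open Classical in
/-- The involution `τ_i` on Kreweras words of length `3 * n`: swap the letters in
(1-indexed) positions `i` and `i + 1` if the result is again a Kreweras word,
and otherwise do nothing. -/
noncomputable def tau (n i : ℕ) (w : List KLetter) : List KLetter :=
  let w' := (w.set (i - 1) (w.getD i A)).set i (w.getD (i - 1) A)
  if IsKrewerasWord n w' then w' else w

/-- `tauDown n j = τ_j ∘ τ_{j-1} ∘ ⋯ ∘ τ_1`. -/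
noncomputable def tauDown (n : ℕ) : ℕ → List KLetter → List KLetter
  | 0, w => w
  | j + 1, w => tau n (j + 1) (tauDown n j w)

/-- `evacAux n j = (tauDown n 1) ∘ (tauDown n 2) ∘ ⋯ ∘ (tauDown n j)`. -/
noncomputable def evacAux (n : ℕ) : ℕ → List KLetter → List KLetter
  | 0, w => w
  | j + 1, w => evacAux n j (tauDown n (j + 1) w)

/-- Evacuation on Kreweras words of length `3 * n`:
`evac = (τ_1) ∘ (τ_2 ∘ τ_1) ∘ ⋯ ∘ (τ_{3n-1} ∘ ⋯ ∘ τ_2 ∘ τ_1)`. -/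
noncomputable def evac (n : ℕ) (w : List KLetter) : List KLetter :=
  evacAux n (3 * n - 1) w

/-- `tauAsc n k c = τ_{k+c-1} ∘ ⋯ ∘ τ_{k+1} ∘ τ_k`. -/
noncomputable def tauAsc (n k : ℕ) : ℕ → List KLetter → List KLetter
  | 0, w => w
  | j + 1, w => tau n (k + j) (tauAsc n k j w)

/-- `evacStarAux n j = (tauAsc n 1 (3n-1)) ∘ (tauAsc n 2 (3n-2)) ∘ ⋯ ∘ (tauAsc n j (3n-j))`. -/
noncomputable def evacStarAux (n : ℕ) : ℕ → List KLetter → List KLetter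
  | 0, w => w
  | j + 1, w => evacStarAux n j (tauAsc n (j + 1) (3 * n - (j + 1)) w)

/-- Dual evacuation on Kreweras words of length `3 * n`:
`evac* = (τ_{3n-1} ∘ ⋯ ∘ τ_1) ∘ (τ_{3n-1} ∘ ⋯ ∘ τ_2) ∘ ⋯ ∘ (τ_{3n-1})`. -/
noncomputable def evacStar (n : ℕ) (w : List KLetter) : List KLetter :=
  evacStarAux n (3 * n - 1) w

/-- The three-element "V"-shaped poset: `a < b`, `a < c`, with `b`, `c` incomparable. -/
inductive VP : Type
  | a | b | c
deriving DecidableEq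

instance : PartialOrder VP where
  le x y := x = y ∨ x = VP.a
  le_refl x := Or.inl rfl
  le_trans x y z hxy hyz := by
    rcases hxy with rfl | rfl
    · exact hyz
    · exact Or.inr rfl
  le_antisymm x y hxy hyx := by
    rcases hxy with rfl | rfl
    · rfl
    · rcases hyx with rfl | rfl <;> rfl

/-- The labeling of elements of `V(n) = VP × Fin n` by letters. -/
def vlabel {n : ℕ} (p : VP × Fin n) : KLetter :=
  match p.1 with
  | VP.a => A
  | VP.b => B
  | VP.c => C

/-- `L` is a linear extension of `V(n) = VP × Fin n` (with the product order):
a list of all elements of `V(n)`, each appearing once, such that `L_i ≤ L_j`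
implies `i ≤ j`. -/
def IsLinearExtension (n : ℕ) (L : List (VP × Fin n)) : Prop :=
  L.Nodup ∧ (∀ p : VP × Fin n, p ∈ L) ∧
  ∀ i j : Fin L.length, L.get i ≤ L.get j → (i : ℕ) ≤ (j : ℕ)

/-- A connected Kreweras word: a Kreweras word of length `3 * n` having no proper
nonempty consecutive substring which is itself a Kreweras word. -/
def ConnectedKrewerasWord (n : ℕ) (w : List KLetter) : Prop :=
  IsKrewerasWord n w ∧
  ∀ (u : List KLetter) (m : ℕ), u <:+: w → u ≠ [] → u ≠ w → ¬ IsKrewerasWord m u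


section KrewerasProof

structure KNum (N : ℕ) (p : ℕ → ℕ) (hit : ℕ → ℕ) (P Q : ℕ → ℕ → ℕ → ℤ) : Prop where
  lo : ∀ t, t < p t
  hi : ∀ t, p t < t + N
  addP : ∀ t a b c, a ≤ b → b ≤ c → P t a b + P t b c = P t a c
  addQ : ∀ t a b c, a ≤ b → b ≤ c → Q t a b + Q t b c = Q t a c
  outP : ∀ t a b, t < a → a ≤ b → b ≤ t + N → (p t < a ∨ b ≤ p t) → P (t+1) a b = P t a b
  outQ : ∀ t a b, t < a → a ≤ b → b ≤ t + N → (p t < a ∨ b ≤ p t) → Q (t+1) a b = Q t a b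
  inP : ∀ t a b, t < a → a ≤ p t → p t < b → b ≤ t + N →
    (hit t = 0 ∧ P (t+1) a b = P t a b + 2) ∨ (¬ hit t = 0 ∧ P (t+1) a b = P t a b + 1)
  inQ : ∀ t a b, t < a → a ≤ p t → p t < b → b ≤ t + N →
    (¬ hit t = 0 ∧ Q (t+1) a b = Q t a b + 2) ∨ (hit t = 0 ∧ Q (t+1) a b = Q t a b + 1)
  nnP : ∀ t j, t ≤ j → j ≤ t + N → 0 ≤ P t t j
  nnQ : ∀ t j, t ≤ j → j ≤ t + N → 0 ≤ Q t t j
  totP : ∀ t, P t t (t + N) = 0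
  totQ : ∀ t, Q t t (t + N) = 0
  posP : ∀ t j, t < j → j ≤ p t → 1 ≤ P t t j
  posQ : ∀ t j, t < j → j ≤ p t → 1 ≤ Q t t j
  zero : ∀ t, (hit t = 0 ∧ P t t (p t + 1) = 0) ∨ (¬ hit t = 0 ∧ Q t t (p t + 1) = 0)
  sgl : ∀ t, (hit t = 0 ∧ P t (p t) (p t + 1) = -1 ∧ Q t (p t) (p t + 1) = 0) ∨
    (¬ hit t = 0 ∧ P t (p t) (p t + 1) = 0 ∧ Q t (p t) (p t + 1) = -1)
  sgl' : ∀ t, P (t+1) (p t) (p t + 1) = 1 ∧ Q (t+1) (p t) (p t + 1) = 1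
  first : ∀ t, P t t (t+1) = 1 ∧ Q t t (t+1) = 1
  app : ∀ t, (hit t = 0 ∧ P (t+1) (t+N) (t+N+1) = -1 ∧ Q (t+1) (t+N) (t+N+1) = 0) ∨
    (¬ hit t = 0 ∧ P (t+1) (t+N) (t+N+1) = 0 ∧ Q (t+1) (t+N) (t+N+1) = -1)

structure Inv1 (N : ℕ) (P Q : ℕ → ℕ → ℕ → ℤ) (v s t : ℕ) : Prop where
  a1 : P t v (v+1) = 1
  a2 : Q t v (v+1) = 1
  b : ∀ j, v < j → j ≤ s → 1 ≤ P t v j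
  c1 : P t s (s+1) = -1
  c2 : Q t s (s+1) = 0
  d : ∀ y, v < y → y ≤ s → ∃ y', y ≤ y' ∧ y' ≤ s ∧ P t y s ≤ Q t y' s
  e : ∀ j, v ≤ j → j ≤ s → Q t j s < P t v s
  f : ∃ j, v < j ∧ j ≤ s ∧ Q t v j ≤ 0
  g : ∀ j, s < j → j ≤ t + N → ∃ i, s < i ∧ i ≤ j ∧ (P t s i ≤ - P t v s ∨ P t s i < Q t s j)

variable {N : ℕ} {p : ℕ → ℕ} {hit : ℕ → ℕ} {P Q : ℕ → ℕ → ℕ → ℤ}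

theorem inv1_start (E : KNum N p hit P Q) (u : ℕ) (hu : hit u = 0) :
    Inv1 N P Q (p u) (u + N) (u + 1) := by
  have h1 := E.lo u
  have h2 := E.hi u
  have hs := E.sgl' u
  have hz := E.zero u
  have ha := E.app u
  have hb : ∀ j, p u < j → j ≤ u + N → 1 ≤ P (u+1) (p u) j := by
    intro j hj1 hj2
    have := E.addP (u+1) (p u) (p u + 1) j (by omega) (by omega)
    have := E.outP u (p u + 1) j (by omega) (by omega) (by omega) (by omega)
    have := E.addP u u (p u + 1) j (by omega) (by omega)
    have := E.nnP u j (by omega) (by omega)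
    omega
  have hQ : ∀ j, u + 1 ≤ j → j ≤ u + N → Q (u+1) j (u+N) ≤ 0 := by
    intro j hj1 hj2
    have := E.addQ (u+1) (u+1) j (u+N) (by omega) (by omega)
    have := E.addQ (u+1) (u+1) (u+N) (u+N+1) (by omega) (by omega)
    have := E.nnQ (u+1) j (by omega) (by omega)
    have := E.totQ (u+1)
    rw [show u + 1 + N = u + N + 1 by omega] at this
    omega
  refine ⟨hs.1, hs.2, hb, by tauto, by tauto, ?_, ?_, ?_, ?_⟩
  · intro y hy1 hy2
    refine ⟨u + N, hy2, le_rfl, ?_⟩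
    have := E.outP u y (u + N) (by omega) (by omega) (by omega) (by omega)
    have := E.addP u u y (u+N) (by omega) (by omega)
    have := E.nnP u y (by omega) (by omega)
    have := E.totP u
    have := E.addQ (u+1) (u+N) (u+N) (u+N) (by omega) (by omega)
    omega
  · intro j hj1 hj2
    have := hQ j (by omega) hj2
    have := hb (u+N) (by omega) (by omega)
    omega
  · exact ⟨u+N, by omega, by omega, hQ _ (by omega) (by omega)⟩
  · intro j hj1 hj2
    obtain rfl : j = u + N + 1 := by omega
    refine ⟨u+N+1, by omega, by omega, Or.inr ?_⟩
    have : ¬ (¬ hit u = 0) := not_not.2 hu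
    omega

/-- The effect of a `Q`-hit strictly between `v` and `s` on property `d`. -/
theorem d_upd (E : KNum N p hit P Q) {v s t : ℕ} (htv : t ≤ v) (hs : s ≤ t + N)
    (hz1 : v < p t) (hz2 : p t < s) (hx : ¬ hit t = 0)
    (d : ∀ y, v < y → y ≤ s → ∃ y', y ≤ y' ∧ y' ≤ s ∧ P t y s ≤ Q t y' s) :
    ∀ y, v < y → y ≤ s → ∃ y', y ≤ y' ∧ y' ≤ s ∧ P (t+1) y s ≤ Q (t+1) y' s := by
  intro y hy1 hy2
  obtain ⟨y', h1, h2, h3⟩ := d y hy1 hy2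
  have hzero := E.zero t
  have hsgl := E.sgl t
  rcases lt_or_ge (p t) y with h | h
  · refine ⟨y', h1, h2, ?_⟩
    have := E.outP t y s (by omega) (by omega) (by omega) (by omega)
    have := E.outQ t y' s (by omega) (by omega) (by omega) (by omega)
    omega
  · have := E.inP t y s (by omega) (by omega) (by omega) (by omega)
    rcases lt_or_ge (p t) y' with h' | h'
    · refine ⟨p t, by omega, by omega, ?_⟩
      have := E.inQ t (p t) s (by omega) (by omega) (by omega) (by omega)
      have := E.addQ t (p t) (p t + 1) s (by omega) (by omega)
      have := E.addQ t (p t + 1) y' s (by omega) (by omega)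
      have := E.addQ t t (p t + 1) y' (by omega) (by omega)
      have := E.nnQ t y' (by omega) (by omega)
      omega
    · refine ⟨y', by omega, by omega, ?_⟩
      have := E.inQ t y' s (by omega) (by omega) (by omega) (by omega)
      omega

theorem inv1_step (E : KNum N p hit P Q) {v s t : ℕ} (hvs : v < s) (ht : t < v) (hs : s < t + N)
    (I : Inv1 N P Q v s t) : Inv1 N P Q v s (t+1) := by
  have h1 := E.lo t
  have h2 := E.hi t
  have hz := E.zero t
  have hsg := E.sgl t
  have a1 := I.a1
  have a2 := I.a2
  have c1 := I.c1
  have c2 := I.c2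
  have hzv : p t ≠ v := by
    intro h
    rw [h] at hsg
    omega
  have hzs : p t ≠ s := by
    intro h
    rw [h] at hsg hz
    have := E.addP t t s (s+1) (by omega) (by omega)
    have := E.addP t t v s (by omega) (by omega)
    have := E.posP t v (by omega) (by omega)
    have := I.b s (by omega) (by omega)
    omega
  have hnX : v < p t → p t < s → ¬ hit t = 0 := by
    intro h h' hh
    have := E.addP t t v (p t + 1) (by omega) (by omega)
    have := E.posP t v (by omega) (by omega)
    have := I.b (p t + 1) (by omega) (by omega)
    have : ¬ ¬ hit t = 0 := not_not.2 hh
    omega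
  -- monotonicity
  have hPge : ∀ j, v < j → j ≤ s → P t v j ≤ P (t+1) v j := by
    intro j hj1 hj2
    by_cases h : v ≤ p t ∧ p t < j
    · have := E.inP t v j (by omega) (by omega) (by omega) (by omega)
      omega
    · have := E.outP t v j (by omega) (by omega) (by omega) (by omega)
      omega
  have hnew : ∃ i, s < i ∧ i ≤ t + 1 + N ∧ (P (t+1) s i ≤ - P (t+1) v s ∨ P (t+1) s i < Q (t+1) s (t+1+N)) := by
    refine ⟨t+1+N, by omega, le_rfl, Or.inl ?_⟩
    have := E.totP (t+1)
    have := E.addP (t+1) (t+1) s (t+1+N) (by omega) (by omega)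
    have := E.addP (t+1) (t+1) v s (by omega) (by omega)
    have := E.nnP (t+1) v (by omega) (by omega)
    omega
  refine ⟨?_, ?_, ?_, ?_, ?_, ?_, ?_, ?_, ?_⟩
  · rw [E.outP t v (v+1) (by omega) (by omega) (by omega) (by omega)]; exact a1
  · rw [E.outQ t v (v+1) (by omega) (by omega) (by omega) (by omega)]; exact a2
  · intro j hj1 hj2
    have := hPge j hj1 hj2
    have := I.b j hj1 hj2
    omega
  · rw [E.outP t s (s+1) (by omega) (by omega) (by omega) (by omega)]; exact c1
  · rw [E.outQ t s (s+1) (by omega) (by omega) (by omega) (by omega)]; exact c2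
  · by_cases h : v < p t ∧ p t < s
    · exact d_upd E (by omega) (by omega) h.1 h.2 (hnX h.1 h.2) I.d
    · intro y hy1 hy2
      obtain ⟨y', h1, h2, h3⟩ := I.d y hy1 hy2
      refine ⟨y', h1, h2, ?_⟩
      rw [E.outP t y s (by omega) (by omega) (by omega) (by omega),
        E.outQ t y' s (by omega) (by omega) (by omega) (by omega)]
      exact h3
  · intro j hj1 hj2
    have hj := I.e j hj1 hj2
    have hm := hPge s (by omega) (by omega)
    by_cases h : j ≤ p t ∧ p t < s
    · have hn := hnX (by omega) (by omega)
      have := E.inP t v s (by omega) (by omega) (by omega) (by omega)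
      have := E.inQ t j s (by omega) (by omega) (by omega) (by omega)
      have := I.e (p t + 1) (by omega) (by omega)
      have := E.addQ t j (p t + 1) s (by omega) (by omega)
      have := E.addQ t t j (p t + 1) (by omega) (by omega)
      have := E.posQ t j (by omega) (by omega)
      omega
    · have := E.outQ t j s (by omega) (by omega) (by omega) (by omega)
      omega
  · obtain ⟨j, hj1, hj2, hj3⟩ := I.f
    by_cases h : v < p t ∧ p t < j
    · have hn := hnX (by omega) (by omega)
      refine ⟨p t, by omega, by omega, ?_⟩
      have := E.outQ t v (p t) (by omega) (by omega) (by omega) (by omega)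
      have := E.addQ t t v (p t) (by omega) (by omega)
      have := E.addQ t t (p t) (p t + 1) (by omega) (by omega)
      have := E.posQ t v (by omega) (by omega)
      omega
    · refine ⟨j, hj1, hj2, ?_⟩
      rw [E.outQ t v j (by omega) (by omega) (by omega) (by omega)]
      exact hj3
  · intro j hj1 hj2
    by_cases hjl : j = t + 1 + N
    · rw [hjl]; exact hnew
    have hjt : j ≤ t + N := by omega
    obtain ⟨i, hi1, hi2, hi3⟩ := I.g j hj1 hjt
    rcases lt_or_ge (p t) s with hzs' | hzs'
    · refine ⟨i, hi1, hi2, ?_⟩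
      have := E.outP t s i (by omega) (by omega) (by omega) (by omega)
      have := E.outQ t s j (by omega) (by omega) (by omega) (by omega)
      by_cases h : v < p t
      · have hn := hnX (by omega) (by omega)
        have := E.addQ t t s j (by omega) (by omega)
        have := E.addQ t t (p t + 1) s (by omega) (by omega)
        have := E.nnQ t j (by omega) (by omega)
        have := I.e (p t + 1) (by omega) (by omega)
        omega
      · have := E.outP t v s (by omega) (by omega) (by omega) (by omega)
        omega
    · have hPv := E.outP t v s (by omega) (by omega) (by omega) (by omega)
      rcases lt_or_ge (p t) j with hzj | hzj
      · by_cases hx : hit t = 0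
        · refine ⟨p t, by omega, by omega, Or.inl ?_⟩
          have := E.outP t s (p t) (by omega) (by omega) (by omega) (by omega)
          have := E.addP t t v s (by omega) (by omega)
          have := E.addP t t s (p t) (by omega) (by omega)
          have := E.addP t t (p t) (p t + 1) (by omega) (by omega)
          have := E.posP t v (by omega) (by omega)
          have : ¬ ¬ hit t = 0 := not_not.2 hx
          omega
        · obtain ⟨k, hk1, hk2, hk3⟩ := I.g (p t) (by omega) (by omega)
          refine ⟨k, hk1, by omega, ?_⟩
          have := E.outP t s k (by omega) (by omega) (by omega) (by omega)
          have := E.inQ t s j (by omega) (by omega) (by omega) (by omega)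
          have := E.addQ t t s j (by omega) (by omega)
          have := E.addQ t s (p t) (p t + 1) (by omega) (by omega)
          have := E.addQ t t s (p t + 1) (by omega) (by omega)
          have := E.nnQ t j (by omega) (by omega)
          omega
      · refine ⟨i, hi1, hi2, ?_⟩
        have := E.outP t s i (by omega) (by omega) (by omega) (by omega)
        have := E.outQ t s j (by omega) (by omega) (by omega) (by omega)
        omega

structure Inv2 (N : ℕ) (P Q : ℕ → ℕ → ℕ → ℤ) (s e t : ℕ) : Prop where
  a1 : P t e (e+1) = 0
  a2 : Q t e (e+1) = -1
  b : ∀ j, s < j → j ≤ e → Q t s (e+1) < Q t s j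
  c : ∀ j, s ≤ j → j ≤ e + 1 → Q t s (e+1) ≤ P t s j
  d : ∀ j, s < j → j ≤ e → ∃ i, s ≤ i ∧ i ≤ j ∧ P t s i < Q t s j
  e : ∀ y, t ≤ y → y ≤ s → ∃ y', y ≤ y' ∧ y' ≤ s ∧ (P t y s ≤ Q t y' s ∨ - Q t s (e+1) ≤ Q t y' s)

theorem inv2_start (E : KNum N p hit P Q) {v s : ℕ} (hvs : v < s) (hs : s < v + N)
    (I : Inv1 N P Q v s v) : Inv2 N P Q s (v + N) (v + 1) := by
  have h1 := E.lo v
  have h2 := E.hi v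
  have hz := E.zero v
  have hsg := E.sgl v
  have hap := E.app v
  obtain ⟨j0, hj1, hj2, hj3⟩ := I.f
  have hzs : p v < s := by
    by_contra h
    have := E.posQ v j0 (by omega) (by omega)
    omega
  have hx : ¬ hit v = 0 := by
    intro h
    have := I.b (p v + 1) (by omega) (by omega)
    omega
  have hd := d_upd E le_rfl (by omega) h1 hzs hx I.d
  have htP := E.totP (v+1)
  have htQ := E.totQ (v+1)
  rw [show v + 1 + N = v + N + 1 by omega] at htP htQ
  have hsumQ := E.addQ (v+1) (v+1) s (v+N+1) (by omega) (by omega)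
  have hsumP := E.addP (v+1) (v+1) s (v+N+1) (by omega) (by omega)
  refine ⟨by omega, by omega, ?_, ?_, ?_, ?_⟩
  · intro j hj1 hj2
    have := E.inQ v (v+1) j (by omega) (by omega) (by omega) (by omega)
    have := E.addQ v v (v+1) j (by omega) (by omega)
    have := E.addQ (v+1) (v+1) s j (by omega) (by omega)
    have := E.nnQ v j (by omega) (by omega)
    have := I.a2
    omega
  · intro j hj1 hj2
    obtain ⟨y', h1, h2, h3⟩ := hd (v+1) (by omega) (by omega)
    have := E.addQ (v+1) (v+1) y' s (by omega) (by omega)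
    have := E.nnQ (v+1) y' (by omega) (by omega)
    have := E.nnP (v+1) j (by omega) (by omega)
    have := E.addP (v+1) (v+1) s j (by omega) (by omega)
    omega
  · intro j hj1 hj2
    obtain ⟨i, hi1, hi2, hi3⟩ := I.g j hj1 hj2
    refine ⟨i, by omega, hi2, ?_⟩
    rw [E.outP v s i (by omega) (by omega) (by omega) (by omega),
      E.outQ v s j (by omega) (by omega) (by omega) (by omega)]
    have := I.e v (by omega) (by omega)
    have := E.addQ v v s j (by omega) (by omega)
    have := E.nnQ v j (by omega) (by omega)
    omega
  · intro y hy1 hy2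
    obtain ⟨y', h1, h2, h3⟩ := hd y (by omega) (by omega)
    exact ⟨y', h1, h2, Or.inl h3⟩

theorem inv2_step (E : KNum N p hit P Q) {s e t : ℕ} (hts : t < s) (hse : s < e) (he : e < t + N)
    (I : Inv2 N P Q s e t) : p t ≠ e ∧ Inv2 N P Q s e (t+1) := by
  have h1 := E.lo t
  have h2 := E.hi t
  have hz := E.zero t
  have hsg := E.sgl t
  have a1 := I.a1
  have a2 := I.a2
  have hQe := E.addQ t s e (e+1) (by omega) (by omega)
  have hPe := E.addP t s e (e+1) (by omega) (by omega)
  have hQt := E.addQ t t s (e+1) (by omega) (by omega)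
  have hQn := E.nnQ t (e+1) (by omega) (by omega)
  have hss := E.addQ t s s s le_rfl le_rfl
  have hssP := E.addP t s s s le_rfl le_rfl
  obtain ⟨i0, hi1, hi2, hi3⟩ : ∃ i, s ≤ i ∧ i ≤ e ∧ P t s i ≤ Q t s (e+1) := by
    obtain ⟨i, hi1, hi2, hi3⟩ := I.d e hse le_rfl
    exact ⟨i, hi1, hi2, by omega⟩
  have hPi := E.addP t t s i0 (by omega) (by omega)
  have hPin := E.nnP t i0 (by omega) (by omega)
  have hne : p t ≠ e := by
    intro h
    rw [h] at hz hsg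
    have hpos := E.posP t i0 (by omega) (by omega)
    obtain ⟨y', hy1, hy2, hy3⟩ := I.e (t+1) (by omega) (by omega)
    have := E.addQ t t y' s (by omega) (by omega)
    have := E.posQ t y' (by omega) (by omega)
    have := E.addP t t (t+1) s (by omega) (by omega)
    have hB := E.addP t t s e (by omega) (by omega)
    obtain ⟨y2, hy4, hy5, hy6⟩ := I.e t (by omega) (by omega)
    have := E.addQ t t y2 s (by omega) (by omega)
    have := E.nnQ t y2 (by omega) (by omega)
    have := E.first t
    omega
  refine ⟨hne, ?_⟩
  rcases lt_or_ge (p t) s with hzs | hzs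
  · have hoP : ∀ i, s ≤ i → i ≤ e + 1 → P (t+1) s i = P t s i := fun i h h' =>
      E.outP t s i (by omega) (by omega) (by omega) (by omega)
    have hoQ : ∀ i, s ≤ i → i ≤ e + 1 → Q (t+1) s i = Q t s i := fun i h h' =>
      E.outQ t s i (by omega) (by omega) (by omega) (by omega)
    refine ⟨?_, ?_, ?_, ?_, ?_, ?_⟩
    · rw [E.outP t e (e+1) (by omega) (by omega) (by omega) (by omega)]; exact a1
    · rw [E.outQ t e (e+1) (by omega) (by omega) (by omega) (by omega)]; exact a2
    · intro j hj1 hj2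
      rw [hoQ _ (by omega) (by omega), hoQ _ (by omega) (by omega)]
      exact I.b j hj1 hj2
    · intro j hj1 hj2
      rw [hoQ _ (by omega) (by omega), hoP _ (by omega) (by omega)]
      exact I.c j hj1 hj2
    · intro j hj1 hj2
      obtain ⟨i, hi1, hi2, hi3⟩ := I.d j hj1 hj2
      refine ⟨i, hi1, hi2, ?_⟩
      rw [hoQ _ (by omega) (by omega), hoP _ (by omega) (by omega)]
      exact hi3
    · intro y hy1 hy2
      rw [hoQ _ (by omega) (by omega)]
      rcases lt_or_ge (p t) y with hzy | hzy
      · obtain ⟨y', h1, h2, h3⟩ := I.e y (by omega) (by omega)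
        refine ⟨y', h1, h2, ?_⟩
        rw [E.outP t y s (by omega) (by omega) (by omega) (by omega),
          E.outQ t y' s (by omega) (by omega) (by omega) (by omega)]
        exact h3
      · by_cases hx : hit t = 0
        · obtain ⟨y', h1, h2, h3⟩ := I.e (p t + 1) (by omega) (by omega)
          refine ⟨y', by omega, h2, Or.inr ?_⟩
          rw [E.outQ t y' s (by omega) (by omega) (by omega) (by omega)]
          have := E.addP t t (p t + 1) s (by omega) (by omega)
          omega
        · refine ⟨p t + 1, by omega, by omega, Or.inr ?_⟩
          rw [E.outQ t (p t + 1) s (by omega) (by omega) (by omega) (by omega)]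
          have := E.addQ t t (p t + 1) s (by omega) (by omega)
          omega
  have heS : ∀ y, t + 1 ≤ y → y ≤ s → P (t+1) y s = P t y s ∧ Q (t+1) y s = Q t y s :=
    fun y h h' => ⟨E.outP t y s (by omega) (by omega) (by omega) (by omega),
      E.outQ t y s (by omega) (by omega) (by omega) (by omega)⟩
  rcases lt_or_ge e (p t) with hze | hze
  · have hoP : ∀ i, s ≤ i → i ≤ e + 1 → P (t+1) s i = P t s i := fun i h h' =>
      E.outP t s i (by omega) (by omega) (by omega) (by omega)
    have hoQ : ∀ i, s ≤ i → i ≤ e + 1 → Q (t+1) s i = Q t s i := fun i h h' =>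
      E.outQ t s i (by omega) (by omega) (by omega) (by omega)
    refine ⟨?_, ?_, ?_, ?_, ?_, ?_⟩
    · rw [E.outP t e (e+1) (by omega) (by omega) (by omega) (by omega)]; exact a1
    · rw [E.outQ t e (e+1) (by omega) (by omega) (by omega) (by omega)]; exact a2
    · intro j hj1 hj2
      rw [hoQ _ (by omega) (by omega), hoQ _ (by omega) (by omega)]
      exact I.b j hj1 hj2
    · intro j hj1 hj2
      rw [hoQ _ (by omega) (by omega), hoP _ (by omega) (by omega)]
      exact I.c j hj1 hj2
    · intro j hj1 hj2
      obtain ⟨i, hi1, hi2, hi3⟩ := I.d j hj1 hj2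
      refine ⟨i, hi1, hi2, ?_⟩
      rw [hoQ _ (by omega) (by omega), hoP _ (by omega) (by omega)]
      exact hi3
    · intro y hy1 hy2
      obtain ⟨y', h1, h2, h3⟩ := I.e y (by omega) (by omega)
      refine ⟨y', h1, h2, ?_⟩
      rw [hoQ _ (by omega) (by omega), (heS y (by omega) (by omega)).1,
        (heS y' (by omega) (by omega)).2]
      exact h3
  -- now `s ≤ p t < e`
  have hx : hit t = 0 := by
    by_contra hx
    have := E.addQ t t s (p t + 1) (by omega) (by omega)
    have := I.b (p t + 1) (by omega) (by omega)
    omega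
  have hPz := E.addP t t s (p t + 1) (by omega) (by omega)
  have hPz' := E.addP t s (p t) (p t + 1) (by omega) (by omega)
  have hcz := I.c (p t + 1) (by omega) (by omega)
  have hinQe := E.inQ t s (e+1) (by omega) (by omega) (by omega) (by omega)
  -- `P t t s = m`
  have hdelta : P t t s = - Q t s (e+1) := by omega
  have hpos : ∀ j, s ≤ j → j ≤ p t → Q t s (e+1) + 1 ≤ P t s j := by
    intro j hj1 hj2
    have := E.addP t t s j (by omega) (by omega)
    have := E.posP t j (by omega) (by omega)
    omega
  refine ⟨?_, ?_, ?_, ?_, ?_, ?_⟩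
  · rw [E.outP t e (e+1) (by omega) (by omega) (by omega) (by omega)]; exact a1
  · rw [E.outQ t e (e+1) (by omega) (by omega) (by omega) (by omega)]; exact a2
  · intro j hj1 hj2
    rcases lt_or_ge (p t) j with hj | hj
    · have := E.inQ t s j (by omega) (by omega) (by omega) (by omega)
      have := I.b j hj1 hj2
      omega
    · have := E.outQ t s j (by omega) (by omega) (by omega) (by omega)
      obtain ⟨i, hi1, hi2, hi3⟩ := I.d j hj1 hj2
      have := hpos i (by omega) (by omega)
      omega
  · intro j hj1 hj2
    rcases lt_or_ge (p t) j with hj | hj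
    · have := E.inP t s j (by omega) (by omega) (by omega) (by omega)
      have := I.c j hj1 hj2
      omega
    · have := E.outP t s j (by omega) (by omega) (by omega) (by omega)
      have := hpos j (by omega) (by omega)
      omega
  · intro j hj1 hj2
    rcases lt_or_ge (p t) j with hj | hj
    · refine ⟨p t, by omega, by omega, ?_⟩
      have := E.outP t s (p t) (by omega) (by omega) (by omega) (by omega)
      have := E.inQ t s j (by omega) (by omega) (by omega) (by omega)
      have := I.b j hj1 hj2
      omega
    · obtain ⟨i, hi1, hi2, hi3⟩ := I.d j hj1 hj2
      refine ⟨i, hi1, hi2, ?_⟩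
      rw [E.outP t s i (by omega) (by omega) (by omega) (by omega),
        E.outQ t s j (by omega) (by omega) (by omega) (by omega)]
      exact hi3
  · intro y hy1 hy2
    obtain ⟨y', h1, h2, h3⟩ := I.e y (by omega) (by omega)
    refine ⟨y', h1, h2, ?_⟩
    rw [(heS y (by omega) (by omega)).1, (heS y' (by omega) (by omega)).2]
    omega

theorem main_hit (E : KNum N p hit P Q) (u t : ℕ) (hu : hit u = 0) (h1 : u < t)
    (h2 : t < u + N) : p t ≠ p u + N := by
  have hlo := E.lo u
  have hhi := E.hi u
  have I1 : ∀ k, u + 1 + k ≤ p u → Inv1 N P Q (p u) (u + N) (u + 1 + k) := by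
    intro k
    induction k with
    | zero => intro _; exact inv1_start E u hu
    | succ k ih =>
      intro hk
      exact inv1_step E (t := u + 1 + k) (by omega) (by omega) (by omega) (ih (by omega))
  have J := inv2_start E (by omega) (by omega)
    (by have := I1 (p u - (u+1)) (by omega)
        rwa [show u + 1 + (p u - (u+1)) = p u by omega] at this)
  have I2 : ∀ k, p u + 1 + k ≤ u + N → Inv2 N P Q (u + N) (p u + N) (p u + 1 + k) := by
    intro k
    induction k with
    | zero => intro _; exact J
    | succ k ih =>
      intro hk
      exact (inv2_step E (t := p u + 1 + k) (by omega) (by omega) (by omega) (ih (by omega))).2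
  rcases le_or_gt t (p u) with h | h
  · have := E.hi t
    omega
  · have := I2 (t - (p u + 1)) (by omega)
    rw [show p u + 1 + (t - (p u + 1)) = t by omega] at this
    exact (inv2_step E (by omega) (by omega) (by omega) this).1

theorem KNum.swap (E : KNum N p hit P Q) : KNum N p (fun t => 1 - hit t) Q P where
  lo := E.lo
  hi := E.hi
  addP := E.addQ
  addQ := E.addP
  outP := E.outQ
  outQ := E.outP
  inP t a b h1 h2 h3 h4 := by have := E.inQ t a b h1 h2 h3 h4; omega
  inQ t a b h1 h2 h3 h4 := by have := E.inP t a b h1 h2 h3 h4; omega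
  nnP := E.nnQ
  nnQ := E.nnP
  totP := E.totQ
  totQ := E.totP
  posP := E.posQ
  posQ := E.posP
  zero t := by have := E.zero t; omega
  sgl t := by have := E.sgl t; omega
  sgl' t := (E.sgl' t).symm
  first t := (E.first t).symm
  app t := by have := E.app t; omega

theorem KNum.main (E : KNum N p hit P Q) (u t : ℕ) (h1 : u < t) (h2 : t < u + N) :
    p t ≠ p u + N := by
  by_cases hu : hit u = 0
  · exact main_hit E u t hu h1 h2
  · exact main_hit E.swap u t (by omega) h1 h2

theorem KNum.ne (E : KNum N p hit P Q) (u t : ℕ) (h1 : u < t) : p t ≠ p u := by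
  intro h
  have hk : ∀ k, u + 1 + k ≤ p u → P (u + 1 + k) (p u) (p u + 1) = 1 ∧
      Q (u + 1 + k) (p u) (p u + 1) = 1 := by
    intro k
    induction k with
    | zero => intro _; exact E.sgl' u
    | succ k ih =>
      intro hk
      have ih := ih (by omega)
      have hl := E.hi u
      have hsg := E.sgl (u+1+k)
      have hne : p (u+1+k) ≠ p u := by
        intro h; rw [h] at hsg; omega
      have h3 := E.outP (u+1+k) (p u) (p u + 1) (by omega) (by omega) (by omega) (by omega)
      have h4 := E.outQ (u+1+k) (p u) (p u + 1) (by omega) (by omega) (by omega) (by omega)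
      rw [← add_assoc]
      omega
  have hl := E.lo t
  have := hk (t - (u+1)) (by omega)
  rw [show u + 1 + (t - (u+1)) = t by omega] at this
  have hsg := E.sgl t
  rw [h] at hsg
  omega

/-! ### Words -/

def kval (X l : KLetter) : ℤ := if l = A then 1 else if l = X then -1 else 0

def kH (X : KLetter) (w : List KLetter) (k : ℕ) : ℤ :=
  ∑ i ∈ Finset.range k, kval X (w.getD i A)

theorem kH_succ (X : KLetter) (w : List KLetter) (k : ℕ) :
    kH X w (k+1) = kH X w k + kval X (w.getD k A) := Finset.sum_range_succ _ _

theorem kH_zero (X : KLetter) (w : List KLetter) : kH X w 0 = 0 := rfl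

theorem kH_eq (X : KLetter) (hX : X ≠ A) (w : List KLetter) (k : ℕ) (hk : k ≤ w.length) :
    kH X w k = ((w.take k).count A : ℤ) - (w.take k).count X := by
  induction k with
  | zero => simp [kH]
  | succ k ih =>
    rw [kH_succ, ih (by omega), List.take_add_one, List.getD_eq_getElem _ _ (by omega),
      List.getElem?_eq_getElem (by omega)]
    generalize w[k] = x
    cases x <;> cases X <;> simp [kval] at hX ⊢ <;> ring

def KGood (N : ℕ) (w : List KLetter) : Prop :=
  w.length = N ∧ ∀ X, X ≠ A → (∀ k, k ≤ N → 0 ≤ kH X w k) ∧ kH X w N = 0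

theorem KGood.of (n : ℕ) (w : List KLetter) (hw : IsKrewerasWord n w) : KGood (3 * n) w := by
  obtain ⟨h1, h2, h3, h4, h5⟩ := hw
  refine ⟨h1, fun X hX => ⟨fun k hk => ?_, ?_⟩⟩
  · rw [kH_eq X hX w k (by omega)]
    have := h5 k
    cases X
    · exact absurd rfl hX
    · omega
    · omega
  · rw [kH_eq X hX w _ (by omega), ← h1, List.take_length, h2]
    cases X
    · exact absurd rfl hX
    · omega
    · omega

theorem kiota_spec (w : List KLetter) (hg : KGood N w) (hN : 1 ≤ N) :
    2 ≤ kiota w ∧ kiota w ≤ N ∧ w.getD 0 A = A ∧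
    (∀ k, 1 ≤ k → k < kiota w → ∀ X, X ≠ A → 1 ≤ kH X w k) ∧
    ((w.getD (kiota w - 1) A = B ∧ kH B w (kiota w) = 0) ∨
     (w.getD (kiota w - 1) A = C ∧ kH C w (kiota w) = 0)) := by
  obtain ⟨hl, hg⟩ := hg
  have hB := hg B (by decide)
  have hC := hg C (by decide)
  have key : 1 ≤ kiota w ∧ kiota w ≤ N ∧ (kH B w (kiota w) = 0 ∨ kH C w (kiota w) = 0) ∧
      ∀ k, 1 ≤ k → k < kiota w → kH B w k ≠ 0 ∧ kH C w k ≠ 0 := by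
    have hq : ∀ k, k ≤ N → ((decide (1 ≤ k) &&
      (((w.take k).count A == (w.take k).count B) ||
       ((w.take k).count A == (w.take k).count C))) = true ↔
        (1 ≤ k ∧ (kH B w k = 0 ∨ kH C w k = 0))) := by
      intro k hk
      rw [kH_eq B (by decide) w k (by omega), kH_eq C (by decide) w k (by omega)]
      simp only [Bool.and_eq_true, decide_eq_true_eq, Bool.or_eq_true, beq_iff_eq]
      omega
    obtain ⟨K, hK⟩ : ∃ K, (List.range (w.length + 1)).find? (fun k => decide (1 ≤ k) &&
      (((w.take k).count A == (w.take k).count B) ||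
       ((w.take k).count A == (w.take k).count C))) = some K := by
      rw [← Option.isSome_iff_exists, List.find?_isSome]
      exact ⟨N, by simp [hl], (hq N le_rfl).2 ⟨hN, Or.inl hB.2⟩⟩
    have hk : kiota w = K := by
      unfold kiota
      rw [List.headD_eq_head?_getD, List.head?_filter, hK]
      rfl
    rw [hk]
    rw [List.find?_range_eq_some] at hK
    obtain ⟨h1, h2, h3⟩ := hK
    have hKN : K ≤ N := by have := List.mem_range.1 h2; omega
    have := (hq K hKN).1 h1
    refine ⟨this.1, hKN, this.2, ?_⟩
    intro k hk1 hk2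
    have h4 := h3 k hk2
    have h5 := hq k (by omega)
    by_contra hcon
    have : kH B w k = 0 ∨ kH C w k = 0 := by tauto
    rw [h5.2 ⟨hk1, this⟩] at h4
    simp at h4
  obtain ⟨k1, k2, k3, k4⟩ := key
  have hpos : ∀ k, 1 ≤ k → k < kiota w → ∀ X, X ≠ A → 1 ≤ kH X w k := by
    intro k h1 h2 X hX
    have h3 := k4 k h1 h2
    have h4 := (hg X hX).1 k (by omega)
    cases X
    · exact absurd rfl hX
    · omega
    · omega
  have hfst : w.getD 0 A = A := by
    have h1 := hB.1 1 hN
    have h2 := hC.1 1 hN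
    rw [kH_succ, kH_zero] at h1 h2
    revert h1 h2
    generalize w.getD 0 A = x
    cases x <;> simp [kval]
  have hK2 : kiota w ≠ 1 := by
    intro h
    rw [h, kH_succ, kH_zero, kH_succ, kH_zero, hfst] at k3
    simp [kval] at k3
  have hlast : ∀ X, X ≠ A → kH X w (kiota w) = 0 → w.getD (kiota w - 1) A = X := by
    intro X hX h
    have h1 := hpos (kiota w - 1) (by omega) (by omega) X hX
    have h2 := kH_succ X w (kiota w - 1)
    rw [show kiota w - 1 + 1 = kiota w by omega, h] at h2
    revert h2
    generalize w.getD (kiota w - 1) A = x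
    unfold kval
    split_ifs with h3 h4
    · intro; omega
    · intro; exact h4
    · intro; omega
  refine ⟨by omega, k2, hfst, hpos, ?_⟩
  rcases k3 with h | h
  · exact Or.inl ⟨hlast B (by decide) h, h⟩
  · exact Or.inr ⟨hlast C (by decide) h, h⟩

theorem pro_length (w : List KLetter) (h : 1 ≤ w.length) : (pro w).length = w.length := by
  simp [pro]; omega

theorem pro_getD (w : List KLetter) (h : 2 ≤ kiota w) (i : ℕ) (hi : i + 1 < w.length) :
    (pro w).getD i A = if i + 2 = kiota w then A else w.getD (i+1) A := by
  have hlen : (pro w).length = w.length := pro_length w (by omega)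
  rw [List.getD_eq_getElem _ _ (by omega), List.getD_eq_getElem _ _ (by omega)]
  unfold pro
  rw [List.getElem_append_left (by simp; omega), List.getElem_set, List.getElem_drop]
  simp only [show (kiota w - 2 = i) ↔ (i + 2 = kiota w) by omega, add_comm 1 i]

theorem pro_getD_last (w : List KLetter) (h : 1 ≤ w.length) :
    (pro w).getD (w.length - 1) A = w.getD (kiota w - 1) A := by
  have hlen : (pro w).length = w.length := pro_length w (by omega)
  rw [List.getD_eq_getElem _ _ (by omega)]
  unfold pro
  rw [List.getElem_append_right (by simp)]
  simp

theorem kH_pro (w : List KLetter) (hg : KGood N w) (hN : 1 ≤ N) (X : KLetter) (k : ℕ)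
    (hk : k + 1 ≤ N) : kH X (pro w) k = kH X w (k+1) - 1 +
      (if kiota w ≤ k + 1 then 1 - kval X (w.getD (kiota w - 1) A) else 0) := by
  obtain ⟨h1, h2, h3, -, -⟩ := kiota_spec w hg hN
  have hl := hg.1
  induction k with
  | zero =>
    rw [kH_succ, kH_zero, kH_zero, h3, if_neg (by omega)]
    simp [kval]
  | succ k ih =>
    rw [kH_succ, ih (by omega), pro_getD w h1 k (by omega), kH_succ X w (k+1)]
    by_cases h : k + 2 = kiota w
    · rw [if_pos h, if_neg (by omega), if_pos (by omega),
        show kiota w - 1 = k + 1 by omega]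
      simp only [kval, if_true]
      ring
    · rw [if_neg h]
      by_cases h' : kiota w ≤ k + 1
      · rw [if_pos h', if_pos (by omega)]; ring
      · rw [if_neg h', if_neg (by omega)]; ring

theorem kval_le (X l : KLetter) : kval X l ≤ 1 := by
  unfold kval; split_ifs <;> omega

theorem pro_good (w : List KLetter) (hg : KGood N w) (hN : 1 ≤ N) : KGood N (pro w) := by
  obtain ⟨h1, h2, h3, h4, h5⟩ := kiota_spec w hg hN
  have hl := hg.1
  have hlast := pro_getD_last w (by omega)
  refine ⟨by rw [pro_length w (by omega), hl], fun X hX => ?_⟩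
  have htot : kH X (pro w) N = 0 := by
    obtain ⟨M, rfl⟩ : ∃ M, N = M + 1 := ⟨N - 1, by omega⟩
    rw [kH_succ, kH_pro w hg hN X M le_rfl, if_pos h2, (hg.2 X hX).2]
    rw [hl, Nat.add_sub_cancel] at hlast
    rw [hlast]; ring
  refine ⟨fun k hk => ?_, htot⟩
  rcases Nat.lt_or_ge k N with hk' | hk'
  · rw [kH_pro w hg hN X k hk']
    split_ifs with h
    · have := (hg.2 X hX).1 (k+1) hk'
      have hx : kval X (w.getD (kiota w - 1) A) ≤ 0 := by
        rcases h5 with h5 | h5 <;> rw [h5.1] <;> unfold kval <;> split_ifs <;> simp_all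
      omega
    · have := h4 (k+1) (by omega) (by omega) X hX
      omega
  · rw [show k = N by omega, htot]

/-! ### The evolution of a word -/

def kL (w : List KLetter) (t k : ℕ) : KLetter := (pro^[t] w).getD (k - t) A

def kp (w : List KLetter) (t : ℕ) : ℕ := t + kiota (pro^[t] w) - 1

def kS (w : List KLetter) (X : KLetter) (t a b : ℕ) : ℤ :=
  ∑ k ∈ Finset.Ico a b, kval X (kL w t k)

theorem iter_good (w : List KLetter) (hg : KGood N w) (hN : 1 ≤ N) (t : ℕ) :
    KGood N (pro^[t] w) := by
  induction t with
  | zero => exact hg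
  | succ t ih => rw [Function.iterate_succ_apply']; exact pro_good _ ih hN

theorem kS_pre (w : List KLetter) (X : KLetter) (t k : ℕ) :
    kS w X t t (t + k) = kH X (pro^[t] w) k := by
  unfold kS kH kL
  rw [Finset.sum_Ico_eq_sum_range, Nat.add_sub_cancel_left]
  simp only [Nat.add_sub_cancel_left]

theorem kS_add (w : List KLetter) (X : KLetter) (t a b c : ℕ) (h1 : a ≤ b) (h2 : b ≤ c) :
    kS w X t a b + kS w X t b c = kS w X t a c := Finset.sum_Ico_consecutive _ h1 h2

theorem kS_one (w : List KLetter) (X : KLetter) (t a : ℕ) :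
    kS w X t a (a+1) = kval X (kL w t a) := by simp [kS]

theorem kL_next (w : List KLetter) (hg : KGood N w) (hN : 1 ≤ N) (t k : ℕ) (h1 : t < k)
    (h2 : k < t + N) : kL w (t+1) k = if k = kp w t then A else kL w t k := by
  have g := iter_good w hg hN t
  obtain ⟨hK, -⟩ := kiota_spec _ g hN
  unfold kL kp
  rw [Function.iterate_succ_apply', pro_getD _ hK _ (by have := g.1; omega),
    show k - (t+1) + 1 = k - t by omega]
  simp only [show (k - (t+1) + 2 = kiota (pro^[t] w)) ↔ (k = t + kiota (pro^[t] w) - 1) by omega]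

theorem kL_p (w : List KLetter) (hg : KGood N w) (hN : 1 ≤ N) (t : ℕ) :
    kL w t (kp w t) = (pro^[t] w).getD (kiota (pro^[t] w) - 1) A := by
  have g := iter_good w hg hN t
  obtain ⟨hK, -⟩ := kiota_spec _ g hN
  unfold kL kp
  congr 1
  omega

theorem kL_app (w : List KLetter) (hg : KGood N w) (hN : 1 ≤ N) (t : ℕ) :
    kL w (t+1) (t+N) = kL w t (kp w t) := by
  have g := iter_good w hg hN t
  rw [kL_p w hg hN]
  unfold kL
  rw [Function.iterate_succ_apply', ← pro_getD_last _ (by have := g.1; omega), g.1]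
  congr 1
  omega

theorem kS_next (w : List KLetter) (hg : KGood N w) (hN : 1 ≤ N) (X : KLetter) (t a b : ℕ)
    (h1 : t < a) (h2 : b ≤ t + N) : kS w X (t+1) a b = kS w X t a b +
      (if a ≤ kp w t ∧ kp w t < b then 1 - kval X (kL w t (kp w t)) else 0) := by
  have : ∀ k ∈ Finset.Ico a b, kval X (kL w (t+1) k) = kval X (kL w t k) +
      (if k = kp w t then 1 - kval X (kL w t (kp w t)) else 0) := by
    intro k hk
    rw [Finset.mem_Ico] at hk
    rw [kL_next w hg hN t k (by omega) (by omega)]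
    split_ifs with h
    · rw [h]; simp [kval]
    · ring
  unfold kS
  rw [Finset.sum_congr rfl this, Finset.sum_add_distrib, Finset.sum_ite_eq']
  simp only [Finset.mem_Ico]

theorem knum (w : List KLetter) (hg : KGood N w) (hN : 1 ≤ N) :
    KNum N (kp w) (fun t => if kL w t (kp w t) = B then 0 else 1) (kS w B) (kS w C) := by
  have G := fun t => iter_good w hg hN t
  have K := fun t => kiota_spec _ (G t) hN
  have hx : ∀ t, kL w t (kp w t) = B ∨ kL w t (kp w t) = C := by
    intro t
    rw [kL_p w hg hN]
    have := (K t).2.2.2.2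
    tauto
  have hlo : ∀ t, t < kp w t := fun t => by have := K t; unfold kp; omega
  have hhi : ∀ t, kp w t < t + N := fun t => by have := K t; unfold kp; omega
  have hpre : ∀ X t j, t ≤ j → kS w X t t j = kH X (pro^[t] w) (j - t) := by
    intro X t j h
    rw [← kS_pre, Nat.add_sub_cancel' h]
  have hpos : ∀ X, X ≠ A → ∀ t j, t < j → j ≤ kp w t → 1 ≤ kS w X t t j := by
    intro X hX t j h1 h2
    rw [hpre X t j h1.le]
    unfold kp at h2
    exact (K t).2.2.2.1 _ (by omega) (by omega) X hX
  refine
  { lo := hlo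
    hi := hhi
    addP := kS_add w B
    addQ := kS_add w C
    outP := ?_
    outQ := ?_
    inP := ?_
    inQ := ?_
    nnP := ?_
    nnQ := ?_
    totP := ?_
    totQ := ?_
    posP := hpos B (by decide)
    posQ := hpos C (by decide)
    zero := ?_
    sgl := ?_
    sgl' := ?_
    first := ?_
    app := ?_ }
  · intro t a b h1 h2 h3 h4
    rw [kS_next w hg hN B t a b h1 h3, if_neg (by omega), add_zero]
  · intro t a b h1 h2 h3 h4
    rw [kS_next w hg hN C t a b h1 h3, if_neg (by omega), add_zero]
  · intro t a b h1 h2 h3 h4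
    rw [kS_next w hg hN B t a b h1 h4, if_pos (And.intro h2 h3 : a ≤ kp w t ∧ kp w t < b)]
    rcases hx t with h | h <;> rw [h] <;> simp [kval]
  · intro t a b h1 h2 h3 h4
    rw [kS_next w hg hN C t a b h1 h4, if_pos (And.intro h2 h3 : a ≤ kp w t ∧ kp w t < b)]
    rcases hx t with h | h <;> rw [h] <;> simp [kval]
  · intro t j h1 h2
    rw [hpre _ t j h1]
    exact ((G t).2 B (by decide)).1 _ (by omega)
  · intro t j h1 h2
    rw [hpre _ t j h1]
    exact ((G t).2 C (by decide)).1 _ (by omega)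
  · intro t
    rw [kS_pre]
    exact ((G t).2 B (by decide)).2
  · intro t
    rw [kS_pre]
    exact ((G t).2 C (by decide)).2
  · intro t
    have h1 := hlo t
    rw [hpre _ t _ (by omega), hpre _ t _ (by omega), kL_p w hg hN]
    rw [show kp w t + 1 - t = kiota (pro^[t] w) by have := K t; unfold kp; omega]
    rcases (K t).2.2.2.2 with h | h
    · left; exact ⟨by rw [if_pos h.1], h.2⟩
    · right; exact ⟨by rw [h.1]; decide, h.2⟩
  · intro t
    rw [kS_one, kS_one]
    rcases hx t with h | h <;> rw [h] <;> simp [kval]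
  · intro t
    rw [kS_one, kS_one, kL_next w hg hN t _ (hlo t) (hhi t), if_pos rfl]
    simp [kval]
  · intro t
    rw [kS_one, kS_one]
    have : kL w t t = A := by
      unfold kL; rw [Nat.sub_self]; exact (K t).2.2.1
    rw [this]
    simp [kval]
  · intro t
    rw [kS_one, kS_one, kL_app w hg hN]
    rcases hx t with h | h <;> rw [h] <;> simp [kval]

theorem ksigma_eq (n : ℕ) (w : List KLetter) (t : ℕ) :
    ksigma n w (t + 1) = kp w t % (3 * n) + 1 := by
  unfold ksigma kp
  rw [Nat.add_sub_cancel, show kiota (pro^[t] w) + (t + 1) - 2 = t + kiota (pro^[t] w) - 1 by omega]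

theorem kp_inj (w : List KLetter) (hg : KGood N w) (hN : 1 ≤ N) (i j : ℕ) (hij : i < j)
    (hj : j < N) : kp w i % N ≠ kp w j % N := by
  intro h
  have E := knum w hg hN
  have h1 := E.ne i j hij
  have h2 := E.main i j hij (by omega)
  have a1 := E.lo i
  have a2 := E.hi i
  have b1 := E.lo j
  have b2 := E.hi j
  have m1 := Nat.mod_add_div (kp w i) N
  have m2 := Nat.mod_add_div (kp w j) N
  have r := Nat.mod_lt (kp w i) hN
  rw [← h] at m2
  have c1 : kp w i / N < 2 := by rw [Nat.div_lt_iff_lt_mul hN]; omega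
  have c2 : kp w j / N < 2 := by rw [Nat.div_lt_iff_lt_mul hN]; omega
  generalize kp w i / N = x at *
  generalize kp w j / N = y at *
  have hx : x = 0 ∨ x = 1 := by omega
  have hy : y = 0 ∨ y = 1 := by omega
  rcases hx with rfl | rfl <;> rcases hy with rfl | rfl <;> simp only [mul_zero, mul_one] at m1 m2 <;> omega

end KrewerasProof

/-- For every Kreweras word `w` of length `3n`, the map `σ_w` is a bijection
of `{1, …, 3n}`. -/
theorem ksigma_bijective (n : ℕ) (w : List KLetter) (hw : IsKrewerasWord n w) :
    Set.BijOn (ksigma n w) (Set.Icc 1 (3 * n)) (Set.Icc 1 (3 * n)) := by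
  rcases Nat.eq_zero_or_pos n with rfl | hn
  · simp [Set.BijOn, Set.MapsTo, Set.InjOn, Set.SurjOn]
  have hN : 1 ≤ 3 * n := by omega
  have hg := KGood.of n w hw
  have hmaps : Set.MapsTo (ksigma n w) (Set.Icc 1 (3 * n)) (Set.Icc 1 (3 * n)) := by
    intro i hi
    obtain ⟨t, rfl⟩ : ∃ t, i = t + 1 := ⟨i - 1, by have := hi.1; omega⟩
    rw [ksigma_eq]
    have := Nat.mod_lt (kp w t) hN
    exact ⟨by omega, by omega⟩
  have hinj : Set.InjOn (ksigma n w) (Set.Icc 1 (3 * n)) := by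
    intro i hi j hj h
    obtain ⟨t, rfl⟩ : ∃ t, i = t + 1 := ⟨i - 1, by have := hi.1; omega⟩
    obtain ⟨r, rfl⟩ : ∃ r, j = r + 1 := ⟨j - 1, by have := hj.1; omega⟩
    rw [ksigma_eq, ksigma_eq] at h
    have hi2 := hi.2
    have hj2 := hj.2
    rcases lt_trichotomy t r with h' | h' | h'
    · exact absurd (by omega) (kp_inj w hg hN t r h' (by omega))
    · rw [h']
    · exact absurd (by omega) (kp_inj w hg hN r t h' (by omega))
  refine ⟨hmaps, hinj, ?_⟩
  have := Finset.surjOn_of_injOn_of_card_le (s := Finset.Icc 1 (3 * n)) (t := Finset.Icc 1 (3 * n))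
    (ksigma n w) (by simpa using hmaps) (by simpa using hinj) le_rfl
  simpa using this
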